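/- arXiv:2403.15628 — 2 statements merged into one kernel-verified Lean document; each statement's English description precedes it below -/
import Mathlib

section
/- Let (E,T,S,e) be a conditionally ergodic conditional expectation preserving system with T strictly positive and S surjective, and assume every upward directed subset D of E₊ for which {Tf : f ∈ D} is order bounded in E has a supremum in E. Then for every integer n ≥ 1 and every component p of e there exists a component q of P_{Tp}e such that q, Sq, …, S^{n-1}q are pairwise disjoint and T(⋁_{j=0}^{n-1} S^j q) ≥ (P_{Tp}e − (n−1)·Tp)⁺. -/
noncomputable section

open Function Set

variable {E : Type*}

/-- `e` is a weak order unit: `e > 0` and `e ⊓ |x| = 0` implies `x = 0`. -/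
def WeakOrderUnit [Lattice E] [AddCommGroup E] (e : E) : Prop :=
  0 < e ∧ ∀ x : E, e ⊓ (x ⊔ -x) = 0 → x = 0

/-- `p` is a component of `q ∈ E₊`: `0 ≤ p ≤ q` and `(q - p) ⊓ p = 0`. -/
def IsComponent [Lattice E] [AddCommGroup E] (q p : E) : Prop :=
  0 ≤ p ∧ p ≤ q ∧ (q - p) ⊓ p = 0

/-- `partialSup f n = ⋁_{j < n} f j`, with the empty supremum equal to `0`. -/
def partialSup [Lattice E] [Zero E] (f : ℕ → E) : ℕ → E
  | 0 => 0
  | n + 1 => partialSup f n ⊔ f n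

/-- The band projection of `e` onto the band generated by `g`: `P_g e = ⨆_{m ∈ ℕ} (e ⊓ m•g)`. -/
def bandProjApp [ConditionallyCompleteLattice E] [AddCommGroup E] (g e : E) : E :=
  ⨆ m : ℕ, e ⊓ m • g

/-- `qComp Sinv e p k = p ⊓ S⁻ᵏp ⊓ (e - ⋁_{j=1}^{k-1} S⁻ʲp)` (empty supremum is `0`). -/
def qComp [Lattice E] [AddCommGroup E] (Sinv : E → E) (e p : E) (k : ℕ) : E :=
  p ⊓ Sinv^[k] p ⊓ (e - partialSup (fun j => Sinv^[j + 1] p) (k - 1))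

/-- `(E,T,S,e)` is a conditional expectation preserving system: `E` is a Dedekind complete
Riesz space (typeclass assumptions), `e` is a weak order unit, `T` is a strictly positive
conditional expectation operator with `Te = e`, and `S` is an order-continuous Riesz
homomorphism with `Se = e` and `TS = T`. -/
structure IsCEPS [ConditionallyCompleteLattice E] [AddCommGroup E] [Module ℝ E]
    (T S : E →ₗ[ℝ] E) (e : E) : Prop where
  unit : WeakOrderUnit e
  T_pos : ∀ f : E, 0 ≤ f → 0 ≤ T f
  T_strictPos : ∀ f : E, 0 ≤ f → T f = 0 → f = 0
  T_proj : ∀ f : E, T (T f) = T f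
  T_ordCont : ∀ D : Set E, D.Nonempty → DirectedOn (· ≥ ·) D → IsGLB D 0 →
    IsGLB ((⇑T) '' D) 0
  T_range_sublattice : ∀ x ∈ Set.range T, ∀ y ∈ Set.range T, x ⊔ y ∈ Set.range T
  T_range_dedekind : ∀ D : Set E, D ⊆ Set.range T → D.Nonempty →
    (∃ b ∈ Set.range T, ∀ x ∈ D, x ≤ b) →
    ∃ s ∈ Set.range T, (∀ x ∈ D, x ≤ s) ∧ ∀ b ∈ Set.range T, (∀ x ∈ D, x ≤ b) → s ≤ b
  T_weakUnit : ∀ u : E, WeakOrderUnit u → WeakOrderUnit (T u)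
  Te : T e = e
  S_hom : ∀ x y : E, S (x ⊔ y) = S x ⊔ S y
  S_ordCont : ∀ D : Set E, D.Nonempty → DirectedOn (· ≥ ·) D → IsGLB D 0 →
    IsGLB ((⇑S) '' D) 0
  Se : S e = e
  TS : ∀ f : E, T (S f) = T f

/-- `E` is `T`-universally complete: every upward directed subset `D` of `E₊` for which
`T '' D` is order bounded in `E` has a supremum in `E`. -/
def TUnivComplete [ConditionallyCompleteLattice E] [AddCommGroup E] [Module ℝ E]
    (T : E →ₗ[ℝ] E) : Prop :=
  ∀ D : Set E, D.Nonempty → D ⊆ {x : E | 0 ≤ x} → DirectedOn (· ≤ ·) D →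
    BddAbove ((⇑T) '' D) → BddBelow ((⇑T) '' D) → ∃ s : E, IsLUB D s

/-- `(S, v)` is aperiodic (with `Sinv` the inverse of `S`): for every `N ∈ ℕ` and every
nonzero component `c` of `v` there exist `k ≥ N` and a component `u` of `c` with
`q(u,k) ≠ 0`. -/
def IsAperiodic [Lattice E] [AddCommGroup E] (Sinv : E → E) (e v : E) : Prop :=
  ∀ N : ℕ, ∀ c : E, IsComponent v c → c ≠ 0 →
    ∃ k : ℕ, N ≤ k ∧ ∃ u : E, IsComponent c u ∧ qComp Sinv e u k ≠ 0

/-- `(S, e)` is periodic (with `Sinv` the inverse of `S`): there is `N ∈ ℕ` such that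
`q(c,k) = 0` for all `k ≥ N` and all components `c` of `e` with `0 ≠ c ≠ e`. -/
def IsPeriodic [Lattice E] [AddCommGroup E] (Sinv : E → E) (e : E) : Prop :=
  ∃ N : ℕ, ∀ c : E, IsComponent e c → c ≠ 0 → c ≠ e → ∀ k : ℕ, N ≤ k → qComp Sinv e c k = 0

section helpers

variable {E : Type*} [Lattice E] [AddCommGroup E] [IsOrderedAddMonoid E]

lemma kr_add_of_disj {a b : E} (h : a ⊓ b = 0) : a ⊔ b = a + b := by
  have := inf_add_sup a b
  rw [h, zero_add] at this
  exact this

lemma kr_disj_lub {a s : E} {f : ℕ → E} (hs : IsLUB (Set.range f) s) (ha : 0 ≤ a)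
    (hf : ∀ k, 0 ≤ f k) (h : ∀ k, a ⊓ f k = 0) : a ⊓ s = 0 := by
  have h0 : 0 ≤ s := (hf 0).trans (hs.1 ⟨0, rfl⟩)
  apply le_antisymm _ (le_inf ha h0)
  have h1 : s ≤ a ⊔ s - a := by
    apply hs.2
    rintro _ ⟨k, rfl⟩
    have h2 := kr_add_of_disj (h k)
    have h3 : a ⊔ f k ≤ a ⊔ s := sup_le_sup_left (hs.1 ⟨k, rfl⟩) a
    rw [h2] at h3
    exact le_sub_iff_add_le'.2 h3
  have h4 := inf_add_sup a s
  have h5 : a + s ≤ a ⊔ s := le_sub_iff_add_le'.1 h1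
  rw [← h4] at h5
  simpa using h5

lemma kr_inf_add_le {x a b : E} (hx : 0 ≤ x) (ha : 0 ≤ a) (hb : 0 ≤ b) :
    x ⊓ (a + b) ≤ x ⊓ a + x ⊓ b := by
  rw [add_inf]
  refine le_inf (inf_le_left.trans (le_add_of_nonneg_left (le_inf hx ha))) ?_
  rw [inf_add]
  refine le_inf ?_ inf_le_right
  · exact inf_le_left.trans (le_add_of_nonneg_right hb)

lemma kr_inf_nsmul {x v : E} (hx : 0 ≤ x) (hv : 0 ≤ v) (h : x ⊓ v = 0) (m : ℕ) :
    x ⊓ (m • v) = 0 := by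
  induction m with
  | zero => simpa using hx
  | succ m ih =>
    apply le_antisymm _ (le_inf hx (nsmul_nonneg hv _))
    rw [succ_nsmul]
    refine (kr_inf_add_le hx (nsmul_nonneg hv m) hv).trans ?_
    rw [ih, h, add_zero]

lemma kr_disj_mono {a b c d : E} (ha : 0 ≤ a) (hb : 0 ≤ b) (hac : a ≤ c) (hbd : b ≤ d)
    (h : c ⊓ d = 0) : a ⊓ b = 0 :=
  le_antisymm (h ▸ inf_le_inf hac hbd) (le_inf ha hb)

lemma kr_comp_sup {e a b : E} (ha : IsComponent e a) (hb : IsComponent e b) :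
    IsComponent e (a ⊔ b) := by
  obtain ⟨a0, ae, ad⟩ := ha
  obtain ⟨b0, be, bd⟩ := hb
  have h0 : 0 ≤ a ⊔ b := a0.trans le_sup_left
  have h1 : a ⊔ b ≤ e := sup_le ae be
  refine ⟨h0, h1, ?_⟩
  have x0 : 0 ≤ e - a ⊔ b := sub_nonneg.2 h1
  have ha' := kr_disj_mono x0 a0 (sub_le_sub_left le_sup_left e) le_rfl ad
  have hb' := kr_disj_mono x0 b0 (sub_le_sub_left le_sup_right e) le_rfl bd
  apply le_antisymm _ (le_inf x0 h0)
  have h2 : a ⊔ b ≤ a + b := sup_le (le_add_of_nonneg_right b0) (le_add_of_nonneg_left a0)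
  refine (inf_le_inf_left _ h2).trans ((kr_inf_add_le x0 a0 b0).trans ?_)
  rw [ha', hb', add_zero]

lemma kr_comp_lub {e s : E} {f : ℕ → E} (hs : IsLUB (Set.range f) s)
    (hf : ∀ k, IsComponent e (f k)) : IsComponent e s := by
  have hse : s ≤ e := hs.2 (by rintro _ ⟨k, rfl⟩; exact (hf k).2.1)
  have x0 : 0 ≤ e - s := sub_nonneg.2 hse
  refine ⟨(hf 0).1.trans (hs.1 ⟨0, rfl⟩), hse, ?_⟩
  exact kr_disj_lub hs x0 (fun k => (hf k).1) fun k =>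
    kr_disj_mono x0 (hf k).1 (sub_le_sub_left (hs.1 ⟨k, rfl⟩) e) le_rfl (hf k).2.2

lemma kr_comp_sub {e a b : E} (ha : IsComponent e a) (hb : IsComponent e b) (h : a ≤ b) :
    IsComponent e (b - a) := by
  have h0 : 0 ≤ b - a := sub_nonneg.2 h
  have hle : b - a ≤ b := sub_le_self _ ha.1
  have hbe := sub_nonneg.2 hb.2.1
  refine ⟨h0, hle.trans hb.2.1, ?_⟩
  have h1 : e - (b - a) = (e - b) + a := by abel
  rw [h1, inf_comm]
  apply le_antisymm _ (le_inf h0 (add_nonneg hbe ha.1))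
  refine (kr_inf_add_le h0 hbe ha.1).trans ?_
  have h2 : (b - a) ⊓ (e - b) = 0 := by
    rw [inf_comm]; exact kr_disj_mono hbe h0 le_rfl hle hb.2.2
  have h3 : (b - a) ⊓ a = 0 :=
    kr_disj_mono h0 ha.1 (sub_le_sub_right hb.2.1 a) le_rfl ha.2.2
  rw [h2, h3, add_zero]

lemma kr_le_partialSup (f : ℕ → E) {i n : ℕ} (h : i < n) : f i ≤ partialSup f n := by
  induction n with
  | zero => omega
  | succ n ih =>
    rcases Nat.lt_succ_iff_lt_or_eq.1 h with h | rfl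
    · exact (ih h).trans le_sup_left
    · exact le_sup_right

lemma kr_partialSup_mono (f : ℕ → E) : Monotone (partialSup f) :=
  monotone_nat_of_le_succ fun _ => le_sup_left

lemma kr_sub_le (p a b : E) (h : b ≤ a) : p ⊔ a - p ⊔ b ≤ a - b := by
  rw [sub_le_iff_le_add]
  apply sup_le
  · exact le_sup_left.trans (le_add_of_nonneg_left (sub_nonneg.2 h))
  · have : a - b + b ≤ a - b + p ⊔ b := by gcongr; exact le_sup_right
    simpa using this

lemma kr_le_sub (p a b : E) (hp : 0 ≤ p) (hb : 0 ≤ b) : a - b ≤ (p ⊔ a - p ⊔ b) + p := by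
  have h1 : p ⊔ b ≤ p + b := sup_le (le_add_of_nonneg_right hb) (le_add_of_nonneg_left hp)
  have h2 : a ≤ p ⊔ a := le_sup_right
  calc a - b = a - (p + b) + p := by abel
    _ ≤ _ := by gcongr

end helpers

/-- **Kakutani–Rokhlin lemma (ε-free version).** -/
theorem kakutani_rokhlin_free {E : Type*} [ConditionallyCompleteLattice E] [AddCommGroup E]
    [Module ℝ E] [CovariantClass E E (· + ·) (· ≤ ·)] [PosSMulMono ℝ E]
    (T S : E →ₗ[ℝ] E) (e : E) (hCEPS : IsCEPS T S e)
    (hErg : {f : E | S f = f} = Set.range T)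
    (hTuc : TUnivComplete T)
    (hS : Function.Surjective ⇑S)
    (n : ℕ) (hn : 1 ≤ n) (p : E) (hp : IsComponent e p) :
    ∃ q : E, IsComponent (bandProjApp (T p) e) q ∧
      (∀ i j : ℕ, i < n → j < n → i ≠ j → (⇑S)^[i] q ⊓ (⇑S)^[j] q = 0) ∧
      (bandProjApp (T p) e - (n - 1) • T p) ⊔ 0 ≤
        T (partialSup (fun j => (⇑S)^[j] q) n) := by
  have hord : ∀ a b : E, a ≤ b → ∀ c : E, c + a ≤ c + b := fun a b h c =>
    CovariantClass.elim (μ := ((· + ·) : E → E → E)) c h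
  have : IsOrderedAddMonoid E :=
    { add_le_add_left := fun a b h c => by
        first
        | exact hord a b h c
        | (rw [add_comm a, add_comm b]; exact hord a b h c) }
  obtain ⟨N, rfl⟩ : ∃ N, n = N + 1 := ⟨n - 1, by omega⟩
  obtain ⟨-, Tpos, Tstrict, Tproj, -, -, -, -, Te, Shom, -, Se, TS⟩ := hCEPS
  have Tmono : ∀ {x y : E}, x ≤ y → T x ≤ T y := fun {x y} h => by
    have := Tpos (y - x) (sub_nonneg.2 h)
    rwa [map_sub, sub_nonneg] at this
  have Teq : ∀ {x y : E}, x ≤ y → T x = T y → x = y := fun {x y} h h' => by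
    have := Tstrict (y - x) (sub_nonneg.2 h) (by rw [map_sub, h', sub_self])
    exact (sub_eq_zero.1 this).symm
  have Smono : ∀ {x y : E}, x ≤ y → S x ≤ S y := fun {x y} h => by
    have := Shom x y
    rw [sup_eq_right.2 h] at this
    rw [this]; exact le_sup_left
  have Srefl : ∀ {x y : E}, S x ≤ S y → x ≤ y := fun {x y} h => by
    have h1 := Shom x y
    rw [sup_eq_right.2 h] at h1
    have h2 : y = x ⊔ y := Teq le_sup_right (by rw [← TS (x ⊔ y), h1, TS])
    rw [h2]; exact le_sup_left
  have Pmono : ∀ (i : ℕ) {x y : E}, x ≤ y → (S ^ i) x ≤ (S ^ i) y := by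
    intro i
    induction i with
    | zero => intro x y h; simpa using h
    | succ i ih => intro x y h; rw [pow_succ', Module.End.mul_apply, Module.End.mul_apply]; exact Smono (ih h)
  have Prefl : ∀ (i : ℕ) {x y : E}, (S ^ i) x ≤ (S ^ i) y → x ≤ y := by
    intro i
    induction i with
    | zero => intro x y h; simpa using h
    | succ i ih =>
      intro x y h; rw [pow_succ', Module.End.mul_apply, Module.End.mul_apply] at h
      exact ih (Srefl h)
  have Psurj : ∀ (i : ℕ), Function.Surjective (S ^ i) := fun i => by
    rw [Module.End.coe_pow]; exact hS.iterate i
  have PT : ∀ (i : ℕ) (x : E), T ((S ^ i) x) = T x := by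
    intro i
    induction i with
    | zero => intro x; simp
    | succ i ih => intro x; rw [pow_succ', Module.End.mul_apply, TS, ih]
  have Pe : ∀ (i : ℕ), (S ^ i) e = e := by
    intro i
    induction i with
    | zero => simp
    | succ i ih => rw [pow_succ', Module.End.mul_apply, ih, Se]
  have Padd : ∀ (i j : ℕ) (x : E), (S ^ i) ((S ^ j) x) = (S ^ (i + j)) x := fun i j x => by
    rw [pow_add, Module.End.mul_apply]
  have Ppos : ∀ (i : ℕ) {x : E}, 0 ≤ x → 0 ≤ (S ^ i) x := fun i x h => by
    simpa using Pmono i h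
  -- S^i preserves and reflects infima and suprema
  have Pinf : ∀ (i : ℕ) (x y : E), (S ^ i) (x ⊓ y) = (S ^ i) x ⊓ (S ^ i) y := by
    intro i x y
    apply le_antisymm (le_inf (Pmono i inf_le_left) (Pmono i inf_le_right))
    obtain ⟨z, hz⟩ := Psurj i ((S ^ i) x ⊓ (S ^ i) y)
    rw [← hz]
    exact Pmono i (le_inf (Prefl i (hz ▸ inf_le_left)) (Prefl i (hz ▸ inf_le_right)))
  have Plub : ∀ (i : ℕ) (f : ℕ → E) (s : E), IsLUB (Set.range f) s →
      IsLUB (Set.range fun k => (S ^ i) (f k)) ((S ^ i) s) := by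
    intro i f s hs
    constructor
    · rintro _ ⟨k, rfl⟩; exact Pmono i (hs.1 ⟨k, rfl⟩)
    · intro b hb
      obtain ⟨z, rfl⟩ := Psurj i b
      apply Pmono i
      apply hs.2
      rintro _ ⟨k, rfl⟩
      exact Prefl i (hb ⟨k, rfl⟩)
  have Pcomp : ∀ (i : ℕ) (x : E), IsComponent e x ↔ IsComponent e ((S ^ i) x) := by
    intro i x
    have hi : Function.Injective (S ^ i) := fun a b h =>
      le_antisymm (Prefl i h.le) (Prefl i h.ge)
    have h1 : e - (S ^ i) x = (S ^ i) (e - x) := by rw [map_sub, Pe]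
    have h2 : (S ^ i) x ≤ e ↔ x ≤ e :=
      ⟨fun h => Prefl i (by rwa [Pe]), fun h => by simpa [Pe] using Pmono i h⟩
    have h3 : 0 ≤ (S ^ i) x ↔ 0 ≤ x :=
      ⟨fun h => Prefl i (by simpa using h), fun h => Ppos i h⟩
    unfold IsComponent
    rw [h1, ← Pinf, h2, h3, map_eq_zero_iff _ hi]
  have Sfix : ∀ x : E, S x = x → T x = x := by
    intro x hx
    have : x ∈ Set.range T := hErg ▸ hx
    obtain ⟨y, rfl⟩ := this
    exact Tproj y
  simp only [← Module.End.coe_pow]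
  have p0 : 0 ≤ p := hp.1
  set g := T p with hg
  have g0 : 0 ≤ g := Tpos p p0
  have Sg : S g = g := by
    have : g ∈ {f : E | S f = f} := by rw [hErg]; exact ⟨p, rfl⟩
    exact this
  set u := bandProjApp g e with hu
  have e0 : 0 ≤ e := hp.1.trans hp.2.1
  have ulub : IsLUB (Set.range fun m : ℕ => e ⊓ m • g) u :=
    isLUB_ciSup ⟨e, by rintro _ ⟨m, rfl⟩; exact inf_le_left⟩
  have ue : u ≤ e := ulub.2 (by rintro _ ⟨m, rfl⟩; exact inf_le_left)
  have u0 : 0 ≤ u := by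
    refine le_trans ?_ (ulub.1 ⟨0, rfl⟩)
    simpa using e0
  have udisj : (e - u) ⊓ g = 0 := by
    apply le_antisymm _ (le_inf (sub_nonneg.2 ue) g0)
    have : u ≤ u - (e - u) ⊓ g := by
      apply ulub.2
      rintro _ ⟨m, rfl⟩
      rw [le_sub_iff_add_le]
      refine le_trans (le_inf ?_ ?_) (ulub.1 ⟨m + 1, rfl⟩)
      · calc _ ≤ u + (e - u) := add_le_add (ulub.1 ⟨m, rfl⟩) inf_le_left
          _ = e := by abel
      · rw [succ_nsmul]
        exact add_le_add inf_le_right inf_le_right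
    simpa using this
  have Su : S u = u := by
    refine (Teq ?_ (TS u).symm).symm
    apply ulub.2
    rintro _ ⟨m, rfl⟩
    have h1 := Smono (ulub.1 ⟨m, rfl⟩)
    have h2 := Pinf 1 e (m • g)
    simp only [pow_one] at h2
    simp only [h2, Se, map_nsmul, Sg] at h1
    exact h1
  have Tu : T u = u := Sfix u Su
  have pu : p ≤ u := by
    have h0 : 0 ≤ p ⊓ (e - u) := le_inf p0 (sub_nonneg.2 ue)
    have h1 : p ⊓ (e - u) = 0 := by
      apply Tstrict _ h0
      apply le_antisymm _ (Tpos _ h0)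
      rw [← udisj]
      apply le_inf
      · have := Tmono (inf_le_right : p ⊓ (e - u) ≤ e - u)
        rwa [map_sub T e u, Te, Tu] at this
      · exact Tmono inf_le_left
    have h2 := kr_add_of_disj h1
    have h3 : p ⊔ (e - u) ≤ e := sup_le hp.2.1 (sub_le_self _ u0)
    rw [h2] at h3
    have : p ≤ e - (e - u) := le_sub_iff_add_le.2 h3
    simpa using this
  have Pu : ∀ i : ℕ, (S ^ i) u = u := by
    intro i
    induction i with
    | zero => simp
    | succ i ih => rw [pow_succ', Module.End.mul_apply, ih, Su]
  -- the sweeps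
  set R : ℕ → E := partialSup (fun j => (S ^ j) p) with hR
  have Rmono : Monotone R := kr_partialSup_mono _
  have Rzero : R 0 = 0 := rfl
  have Rsucc : ∀ k, R (k + 1) = R k ⊔ (S ^ k) p := fun k => rfl
  have Rs : ∀ k, R (k + 1) = p ⊔ S (R k) := by
    intro k
    induction k with
    | zero => rw [Rsucc, Rzero]; simp [p0]
    | succ k ih =>
      rw [Rsucc (k + 1), ih, ← ih, Rsucc k, Shom, ← Rsucc k, ih, pow_succ', Module.End.mul_apply, sup_assoc]
  have Rcomp : ∀ k, IsComponent e (R k) := by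
    intro k
    induction k with
    | zero => exact ⟨le_rfl, e0, by rw [Rzero]; simpa using e0⟩
    | succ k ih => exact kr_comp_sup ih ((Pcomp k p).1 hp)
  have Ru : ∀ k, R k ≤ u := by
    intro k
    induction k with
    | zero => exact u0
    | succ k ih =>
      refine sup_le ih ?_
      have := Pmono k pu
      rwa [Pu] at this
  -- u is below the supremum of the sweeps
  have uR : ∀ w, (∀ k, R k ≤ w) → u ≤ w := by
    intro w hw
    obtain ⟨v, hv⟩ : ∃ v, IsLUB (Set.range R) v :=
      ⟨_, isLUB_ciSup ⟨e, by rintro _ ⟨m, rfl⟩; exact (Rcomp m).2.1⟩⟩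
    have vw : v ≤ w := hv.2 (by rintro _ ⟨k, rfl⟩; exact hw k)
    refine le_trans ?_ vw
    have vc : IsComponent e v := kr_comp_lub hv Rcomp
    have Sv : S v = v := by
      refine Teq ?_ (TS v)
      have h1 := Plub 1 R v hv
      simp only [pow_one] at h1
      apply h1.2
      rintro _ ⟨k, rfl⟩
      refine le_trans ?_ (hv.1 ⟨k + 1, rfl⟩)
      rw [Rs]; exact le_sup_right
    have gv : g ≤ v := by
      rw [← Sfix v Sv]
      apply Tmono
      refine le_trans ?_ (hv.1 ⟨1, rfl⟩)
      rw [Rs]; exact le_sup_left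
    apply ulub.2
    rintro _ ⟨m, rfl⟩
    have hev : 0 ≤ e - v := sub_nonneg.2 vc.2.1
    have h1 := kr_inf_nsmul hev vc.1 vc.2.2 m
    have h2 : e ⊓ m • g ≤ (e - v) ⊓ m • v + v := by
      rw [inf_add]
      refine inf_le_inf (by simp) ?_
      exact (nsmul_le_nsmul_right gv m).trans (le_add_of_nonneg_right vc.1)
    rwa [h1, zero_add] at h2
  -- the levels
  obtain ⟨L, hL⟩ : ∃ L : ℕ → E, ∀ k, L k = R (k + 1) - R k := ⟨_, fun _ => rfl⟩
  have Lcomp : ∀ k, IsComponent e (L k) := fun k => by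
    rw [hL]; exact kr_comp_sub (Rcomp k) (Rcomp (k + 1)) (Rmono (Nat.le_succ k))
  have L0 : ∀ k, 0 ≤ L k := fun k => (Lcomp k).1
  have LR : ∀ k, L k ⊓ R k = 0 := fun k => by
    refine kr_disj_mono (L0 k) (Rcomp k).1 ?_ le_rfl (Rcomp k).2.2
    rw [hL]; exact sub_le_sub_right (Rcomp _).2.1 _
  have LleR : ∀ k, L k ≤ R (k + 1) := fun k => by
    rw [hL]; exact sub_le_self _ (Rcomp k).1
  have Ldisj' : ∀ k l, l < k → L k ⊓ L l = 0 := fun k l h =>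
    kr_disj_mono (L0 k) (L0 l) le_rfl ((LleR l).trans (Rmono h)) (LR k)
  have Ldisj : ∀ k l, k ≠ l → L k ⊓ L l = 0 := by
    intro k l h
    rcases lt_or_gt_of_ne h with h | h
    · rw [inf_comm]; exact Ldisj' _ _ h
    · exact Ldisj' _ _ h
  have Lu : ∀ k, L k ≤ u := fun k => (LleR k).trans (Ru _)
  have L1 : ∀ k, L (k + 1) ≤ S (L k) := fun k => by
    rw [hL, hL, Rs (k + 1), map_sub]
    have := kr_sub_le p _ _ (Smono (Rmono (Nat.le_succ k)))
    rwa [← Rs k] at this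
  have L2 : ∀ k, S (L k) ≤ L (k + 1) + p := fun k => by
    rw [hL, hL, Rs (k + 1), map_sub]
    have := kr_le_sub p (S (R (k + 1))) (S (R k)) p0 (by simpa using Smono (Rcomp k).1)
    rwa [← Rs k] at this
  have L1r : ∀ r k, L (k + r) ≤ (S ^ r) (L k) := by
    intro r k
    induction r with
    | zero => simp
    | succ r ih =>
      rw [pow_succ', Module.End.mul_apply]
      exact (L1 (k + r)).trans (Smono ih)
  have L2r : ∀ r k, (S ^ r) (L k) ≤ L (k + r) + ∑ j ∈ Finset.range r, (S ^ j) p := by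
    intro r k
    induction r with
    | zero => simp
    | succ r ih =>
      rw [pow_succ', Module.End.mul_apply]
      refine (Smono ih).trans ?_
      rw [map_add, Finset.sum_range_succ', map_sum]
      refine (add_le_add_left (L2 (k + r)) _).trans ?_
      apply le_of_eq
      simp only [pow_succ', Module.End.mul_apply, pow_zero, Module.End.one_apply, ← add_assoc]
      abel
  -- the base
  choose d hd using fun k : ℕ => Psurj N (L (k * (N + 1) + N))
  obtain ⟨c, hc⟩ := Psurj N (∑ j ∈ Finset.range N, (S ^ j) p)
  have dcomp : ∀ k, IsComponent e (d k) := fun k => (Pcomp N _).2 (by rw [hd]; exact Lcomp _)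
  have du : ∀ k, d k ≤ u := fun k => Prefl N (by rw [hd, Pu]; exact Lu _)
  have d1 : ∀ k i, i ≤ N → (S ^ i) (d k) ≤ L (k * (N + 1) + i) := by
    intro k i hi
    apply Prefl (N - i)
    rw [Padd, Nat.sub_add_cancel hi, hd]
    have := L1r (N - i) (k * (N + 1) + i)
    rwa [show k * (N + 1) + i + (N - i) = k * (N + 1) + N by omega] at this
  have d2 : ∀ k i, i ≤ N → L (k * (N + 1) + i) ≤ (S ^ i) (d k) + c := by
    intro k i hi
    apply Prefl N
    rw [map_add, hc, Padd, add_comm N i, ← Padd, hd]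
    have h1 := Pmono i (L2r (N - i) (k * (N + 1) + i))
    rw [Padd, show i + (N - i) = N by omega,
      show k * (N + 1) + i + (N - i) = k * (N + 1) + N by omega, map_add, map_sum] at h1
    refine h1.trans ?_
    gcongr
    have h2 : ∑ j ∈ Finset.range N, (S ^ j) p =
        ∑ j ∈ Finset.range i, (S ^ j) p + ∑ j ∈ Finset.range (N - i), (S ^ (i + j)) p := by
      rw [← Finset.sum_range_add, Nat.add_sub_cancel' hi]
    rw [h2]
    simp only [Padd]
    exact le_add_of_nonneg_left (Finset.sum_nonneg fun j _ => Ppos j p0)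
  have c0 : 0 ≤ c := Prefl N (by rw [hc, map_zero]; exact Finset.sum_nonneg fun j _ => Ppos j p0)
  have Tc : T c = N • g := by
    rw [← PT N c, hc, map_sum]
    simp [PT, hg]
  obtain ⟨q, hq⟩ : ∃ q, IsLUB (Set.range d) q :=
    ⟨_, isLUB_ciSup ⟨e, by rintro _ ⟨m, rfl⟩; exact (dcomp m).2.1⟩⟩
  have qcomp : IsComponent e q := kr_comp_lub hq dcomp
  have qu : q ≤ u := hq.2 (by rintro _ ⟨k, rfl⟩; exact du k)
  refine ⟨q, ⟨qcomp.1, qu, ?_⟩, ?_, ?_⟩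
  · exact kr_disj_mono (sub_nonneg.2 qu) qcomp.1 (sub_le_sub_right ue q) le_rfl qcomp.2.2
  · intro i j hi hj hij
    apply kr_disj_lub (Plub j d q hq) (Ppos i qcomp.1) (fun k => Ppos j (dcomp k).1)
    intro l
    rw [inf_comm]
    apply kr_disj_lub (Plub i d q hq) (Ppos j (dcomp l).1) (fun k => Ppos i (dcomp k).1)
    intro k
    refine kr_disj_mono (Ppos j (dcomp l).1) (Ppos i (dcomp k).1) (d1 l j (by omega))
      (d1 k i (by omega)) (Ldisj _ _ ?_)
    intro h
    apply hij
    have h3 := congrArg (· % (N + 1)) h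
    simp only [Nat.mul_add_mod_self_right, Nat.mod_eq_of_lt hi, Nat.mod_eq_of_lt hj] at h3
    exact h3.symm
  · set Q := partialSup (fun j => (S ^ j) q) (N + 1) with hQ
    have Q0 : 0 ≤ Q :=
      (Ppos 0 qcomp.1).trans (kr_le_partialSup (fun j => (S ^ j) q) (Nat.succ_pos N))
    refine sup_le ?_ (Tpos _ Q0)
    have hLw : ∀ m, L m ≤ Q + c := by
      intro m
      have hlt : m % (N + 1) < N + 1 := Nat.mod_lt _ (Nat.succ_pos N)
      have h1 := d2 (m / (N + 1)) (m % (N + 1)) (by omega)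
      rw [Nat.div_add_mod'] at h1
      refine h1.trans ?_
      gcongr
      exact (Pmono _ (hq.1 ⟨_, rfl⟩)).trans (kr_le_partialSup (fun j => (S ^ j) q) hlt)
    have hRw : ∀ k, R k ≤ Q + c := by
      intro k
      induction k with
      | zero => exact add_nonneg Q0 c0
      | succ k ih =>
        have h1 := kr_add_of_disj (LR k)
        rw [hL, sub_add_cancel, ← hL] at h1
        rw [← h1]
        exact sup_le (hLw k) ih
    have h1 := Tmono (uR _ hRw)
    rw [map_add, Tc, Tu] at h1
    rw [sub_le_iff_le_add]
    simpa using h1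
end
end

section
/- Let (E,T,S,e) be a conditionally ergodic conditional expectation preserving system with T strictly positive and S a surjective Riesz homomorphism, assume every upward directed subset D of E₊ for which {Tf : f ∈ D} is order bounded in E has a supremum in E, and assume (S,e) is aperiodic. Then for each real ε with 0 < ε < 1 there exists a surjective Riesz homomorphism S' on E such that (E,T,S',e) is a conditional expectation preserving system (in particular S' is order continuous, S'e = e and TS'f = Tf for all f ∈ E), (S',e) is periodic, and T|(S − S')u| ≤ ε·e for every component u of e. -/
noncomputable section

open Function Set

variable {E : Type*}

theorem rokhlin_free {B : Type*} [CompleteBooleanAlgebra B] (s : B ≃o B) (N : ℕ)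
    (hfree : ∀ c : B, c ≠ ⊥ → ∃ w ≤ c, w ≠ ⊥ ∧ ∀ j, 1 ≤ j → j < N → Disjoint w ((s ^ j) w))
    (hcons : ∀ b : B, s.symm b ≤ b → s.symm b = b) :
    ∃ A : B, (∀ j, 1 ≤ j → j < N → Disjoint A ((s ^ j) A)) ∧
      ⨆ j : ℕ, (s.symm ^ j) A = ⊤ := by
  obtain ⟨A, hA⟩ := zorn_le₀ {A : B | ∀ j, 1 ≤ j → j < N → Disjoint A ((s ^ j) A)} (by
    intro c hc hch
    refine ⟨sSup c, ?_, fun z hz => le_sSup hz⟩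
    intro j h1 h2
    rw [OrderIso.map_sSup]
    simp only [sSup_disjoint_iff, disjoint_iSup_iff]
    intro b hb a ha
    rcases hch.total ha hb with h | h
    · exact (hc hb j h1 h2).mono_left h
    · exact (hc ha j h1 h2).mono_right ((s ^ j).monotone h))
  refine ⟨A, hA.prop, ?_⟩
  set b := ⨆ j : ℕ, (s.symm ^ j) A with hb
  have h0 : A ≤ b := le_iSup_of_le 0 (by simp)
  have h1 : s.symm b ≤ b := by
    rw [hb, OrderIso.map_iSup]
    refine iSup_le fun j => le_iSup_of_le (j+1) ?_
    rw [pow_succ']; rfl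
  have h2 := hcons b h1
  have h3 : s b = b := by
    conv_lhs => rw [← h2]
    simp
  have h4 : ∀ j : ℕ, (s ^ j) b = b := by
    intro j
    induction j with
    | zero => simp
    | succ j ih => rw [pow_succ, RelIso.mul_apply, h3, ih]
  have h5 : ∀ j : ℕ, (s ^ j) bᶜ = bᶜ := by
    intro j
    have := map_compl' (s ^ j) b
    rw [this, h4]
  by_contra hne
  have hc : bᶜ ≠ ⊥ := by simpa using hne
  obtain ⟨w, hw, hw0, hwd⟩ := hfree _ hc
  have hmem : A ⊔ w ∈ {A : B | ∀ j, 1 ≤ j → j < N → Disjoint A ((s ^ j) A)} := by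
    intro j hj1 hj2
    rw [OrderIso.map_sup]
    simp only [disjoint_sup_left, disjoint_sup_right]
    refine ⟨⟨hA.prop j hj1 hj2, ?_⟩, ?_, hwd j hj1 hj2⟩
    · refine (disjoint_compl_left (a := b)).mono hw ?_
      conv_rhs => rw [← h4 j]
      exact (s ^ j).monotone h0
    · refine (disjoint_compl_right (a := b)).mono h0 ?_
      rw [← h5 j]; exact (s ^ j).monotone hw
  have h6 : w ≤ A := le_sup_right.trans (hA.le_of_ge hmem le_sup_left)
  exact hw0 (le_bot_iff.1 ((le_inf hw (h6.trans h0)).trans (by simp)))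

theorem rokhlin_tower {B : Type*} [CompleteBooleanAlgebra B] (s : B ≃o B) (n : ℕ) (hn : 1 ≤ n)
    (A : B) (hA : ⨆ j : ℕ, (s.symm ^ j) A = ⊤) :
    ∃ G : B, (∀ i < n, ∀ j < n, i ≠ j → Disjoint ((s ^ i) G) ((s ^ j) G)) ∧
      ⊤ ≤ (Finset.range n).sup (fun i => (s ^ i) G) ⊔
        (Finset.range n).sup (fun i => (s ^ (i + 1)) A) := by
  set f : ℕ → B := fun j => (s.symm ^ j) A with hf
  set Q : ℕ → B := fun j => (Finset.range j).sup f with hQ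
  set D : ℕ → B := fun j => f j \ Q j with hD
  have sf : ∀ j, s (f (j+1)) = f j := by
    intro j
    simp only [hf]
    rw [pow_succ', RelIso.mul_apply]; simp
  have Qs : ∀ j, Q (j+1) = f j ⊔ Q j := by
    intro j; simp only [hQ]; rw [Finset.range_add_one, Finset.sup_insert]
  have sQ : ∀ j, s (Q (j+1)) = s A ⊔ Q j := by
    intro j
    induction j with
    | zero => rw [Qs, OrderIso.map_sup]; simp [hQ, hf]
    | succ j ih =>
      rw [Qs, OrderIso.map_sup, ih, sf, Qs j]; ac_rfl
  have sD : ∀ j, s (D (j+1)) = f j \ (s A ⊔ Q j) := by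
    intro j
    simp only [hD]
    rw [map_sdiff', sf, sQ]
  have sD1 : ∀ j, s (D (j+1)) ≤ D j := fun j => by
    rw [sD]; exact sdiff_le_sdiff_left le_sup_right
  have sD2 : ∀ j, D j ≤ s (D (j+1)) ⊔ s A := fun j => by
    rw [sD]; simp only [hD]
    rw [sup_comm (s A), ← sdiff_sdiff_left]
    exact le_sdiff_sup
  have sD1' : ∀ i j, (s ^ i) (D (j+i)) ≤ D j := by
    intro i
    induction i with
    | zero => intro j; simp
    | succ i ih =>
      intro j
      rw [pow_succ, RelIso.mul_apply]
      exact ((s ^ i).monotone (sD1 (j+i))).trans (ih j)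
  have sD2' : ∀ i j, D j ≤ (s ^ i) (D (j+i)) ⊔ (Finset.range i).sup (fun k => (s ^ (k+1)) A) := by
    intro i
    induction i with
    | zero => intro j; simp
    | succ i ih =>
      intro j
      refine (ih j).trans (sup_le ?_ ?_)
      · refine ((s ^ i).monotone (sD2 (j+i))).trans ?_
        rw [OrderIso.map_sup, Finset.range_add_one, Finset.sup_insert, pow_succ]
        exact sup_le le_sup_left (le_sup_of_le_right le_sup_left)
      · exact le_sup_of_le_right (Finset.sup_mono (by simp))
  have fQ : ∀ i j, i < j → f i ≤ Q j := fun i j h => Finset.le_sup (f := f) (by simpa using h)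
  have Dd' : ∀ i j, i < j → Disjoint (D i) (D j) := by
    intro i j h
    exact disjoint_sdiff_self_right.mono_left (sdiff_le.trans (fQ i j h))
  have Dd : ∀ i j, i ≠ j → Disjoint (D i) (D j) := by
    intro i j h
    rcases lt_or_gt_of_ne h with h | h
    · exact Dd' i j h
    · exact (Dd' j i h).symm
  have QD : ∀ j, Q j ≤ ⨆ i, D i := by
    intro j
    induction j with
    | zero => simp [hQ]
    | succ j ih =>
      rw [Qs]
      refine sup_le ?_ ih
      have : f j ≤ D j ⊔ Q j := le_sdiff_sup
      exact this.trans (sup_le (le_iSup D j) ih)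
  have Dtop : ⊤ ≤ ⨆ i, D i := by
    rw [← hA]
    exact iSup_le fun j => (fQ j (j+1) (by omega)).trans (QD _)
  refine ⟨⨆ m : ℕ, D (m * n + (n - 1)), ?_, ?_⟩
  · have key : ∀ i < n, (s ^ i) (⨆ m : ℕ, D (m * n + (n - 1))) ≤
        ⨆ m : ℕ, D (m * n + (n - 1 - i)) := by
      intro i hi
      rw [OrderIso.map_iSup]
      refine iSup_mono fun m => ?_
      have : m * n + (n - 1) = (m * n + (n - 1 - i)) + i := by omega
      rw [this]; exact sD1' _ _
    intro i hi j hj hij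
    refine Disjoint.mono (key i hi) (key j hj) ?_
    simp only [iSup_disjoint_iff, disjoint_iSup_iff]
    intro a b
    apply Dd
    intro h
    have := congrArg (· % n) h
    rw [Nat.add_comm, Nat.add_mul_mod_self_right, Nat.add_comm (a*n), Nat.add_mul_mod_self_right,
      Nat.mod_eq_of_lt (by omega), Nat.mod_eq_of_lt (by omega)] at this
    omega
  · refine Dtop.trans (iSup_le fun j => ?_)
    have hlt := Nat.mod_lt j (show 0 < n by omega)
    refine (sD2' (n - 1 - j % n) j).trans (sup_le_sup ?_ ?_)
    · refine le_trans ?_ (Finset.le_sup (b := n - 1 - j % n) (by simp; omega))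
      refine OrderIso.monotone _ (le_iSup_of_le (j / n) (le_of_eq ?_))
      congr 1
      have := Nat.div_add_mod j n
      rw [Nat.mul_comm] at this
      omega
    · exact Finset.sup_mono (by intro x; simp; omega)

section RieszAux

variable {E : Type*} [ConditionallyCompleteLattice E] [AddCommGroup E] [IsOrderedAddMonoid E]

theorem aux_inf_add_le {a b c : E} (ha : 0 ≤ a) (hb : 0 ≤ b) (hc : 0 ≤ c) :
    (a + b) ⊓ c ≤ a ⊓ c + b ⊓ c := by
  rw [add_inf, inf_add, inf_add]
  refine le_inf (le_inf inf_le_left ?_) (le_inf ?_ ?_)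
  · exact inf_le_right.trans (by simpa using hb)
  · exact inf_le_right.trans (by simpa using ha)
  · exact inf_le_right.trans (by simpa using hc)

theorem aux_disj_mono {a b c d : E} (hc : 0 ≤ c) (hd : 0 ≤ d) (h1 : c ≤ a) (h2 : d ≤ b)
    (h : a ⊓ b = 0) : c ⊓ d = 0 :=
  le_antisymm ((inf_le_inf h1 h2).trans h.le) (le_inf hc hd)

theorem aux_disj_add {a b c : E} (ha : 0 ≤ a) (hb : 0 ≤ b) (hc : 0 ≤ c)
    (h1 : a ⊓ c = 0) (h2 : b ⊓ c = 0) : (a + b) ⊓ c = 0 :=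
  le_antisymm ((aux_inf_add_le ha hb hc).trans (by rw [h1, h2, add_zero]))
    (le_inf (add_nonneg ha hb) hc)

theorem aux_disj_nsmul {a c : E} (ha : 0 ≤ a) (hc : 0 ≤ c) (h1 : a ⊓ c = 0) (m : ℕ) :
    (m • a) ⊓ c = 0 := by
  induction m with
  | zero => simpa using hc
  | succ m ih => rw [succ_nsmul]; exact aux_disj_add (nsmul_nonneg ha m) ha hc ih h1

theorem aux_add_le_of_disj {a b c : E} (h : a ⊓ b = 0) (ha : a ≤ c) (hb : b ≤ c) : a + b ≤ c := by
  rw [← inf_add_sup, h, zero_add]; exact sup_le ha hb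

theorem aux_disj_lub {D : Set E} {s y : E} (hs : IsLUB D s) (h0 : 0 ≤ s) (hy : 0 ≤ y)
    (h : ∀ p ∈ D, p ⊓ y = 0) : s ⊓ y = 0 := by
  refine le_antisymm ?_ (le_inf h0 hy)
  have h1 : s ≤ s ⊔ y - y := by
    refine hs.2 fun p hp => ?_
    rw [le_sub_iff_add_le]
    exact aux_add_le_of_disj (h p hp) ((hs.1 hp).trans le_sup_left) le_sup_right
  rw [le_sub_iff_add_le, ← inf_add_sup] at h1
  simpa using h1

theorem aux_sum_le_of_disj {x : ℕ → E} {e : E} (he : 0 ≤ e) (n : ℕ) (h0 : ∀ i < n, 0 ≤ x i)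
    (h1 : ∀ i < n, x i ≤ e) (hd : ∀ i < n, ∀ j < n, i ≠ j → x i ⊓ x j = 0) :
    ∑ i ∈ Finset.range n, x i ≤ e := by
  have key : ∀ k ≤ n, ∑ i ∈ Finset.range k, x i ≤ e ∧ 0 ≤ ∑ i ∈ Finset.range k, x i ∧
      ∀ j < n, k ≤ j → (∑ i ∈ Finset.range k, x i) ⊓ x j = 0 := by
    intro k
    induction k with
    | zero => intro _; simpa [he] using h0
    | succ k ih =>
      intro hk
      obtain ⟨i1, i2, i3⟩ := ih (by omega)
      rw [Finset.sum_range_succ]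
      refine ⟨aux_add_le_of_disj (i3 k (by omega) le_rfl) i1 (h1 k (by omega)),
        add_nonneg i2 (h0 k (by omega)), fun j hj hkj => ?_⟩
      exact aux_disj_add i2 (h0 k (by omega)) (h0 j hj) (i3 j hj (by omega))
        (hd k (by omega) j hj (by omega))
  exact (key n le_rfl).1

theorem isComponent_iff {e p : E} : IsComponent e p ↔ p ⊓ (e - p) = 0 := by
  constructor
  · rintro ⟨-, -, h⟩; rwa [inf_comm]
  · intro h
    refine ⟨h ▸ inf_le_left, ?_, by rwa [inf_comm]⟩
    have : 0 ≤ e - p := h ▸ inf_le_right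
    simpa using this

theorem IsComponent.compl {e p : E} (h : IsComponent e p) : IsComponent e (e - p) := by
  rw [isComponent_iff] at *
  rwa [sub_sub_cancel, inf_comm]

theorem IsComponent.trans {e c u : E} (hc : IsComponent e c) (hu : IsComponent c u) :
    IsComponent e u := by
  rw [isComponent_iff]
  have h1 : (c - u) ⊓ u = 0 := hu.2.2
  have h2 : (e - c) ⊓ u = 0 :=
    aux_disj_mono (sub_nonneg.2 hc.2.1) hu.1 le_rfl hu.2.1 hc.2.2
  have := aux_disj_add (sub_nonneg.2 hc.2.1) (sub_nonneg.2 hu.2.1) hu.1 h2 h1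
  rwa [sub_add_sub_cancel, inf_comm] at this

theorem IsComponent.of_lub {e : E} {D : Set E} {s : E} (hs : IsLUB D s) (h0 : 0 ≤ s)
    (hD : ∀ p ∈ D, IsComponent e p) (hse : s ≤ e) : IsComponent e s := by
  rw [isComponent_iff]
  refine aux_disj_lub hs h0 (sub_nonneg.2 hse) fun p hp => ?_
  exact aux_disj_mono (hD p hp).1 (sub_nonneg.2 hse) le_rfl (sub_le_sub_left (hs.1 hp) e)
    (isComponent_iff.1 (hD p hp))

theorem IsComponent.sup {e p q : E} (hp : IsComponent e p) (hq : IsComponent e q) :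
    IsComponent e (p ⊔ q) :=
  IsComponent.of_lub isLUB_pair (hp.1.trans le_sup_left)
    (by rintro x (rfl | rfl) <;> assumption) (sup_le hp.2.1 hq.2.1)

theorem IsComponent.inf {e p q : E} (hp : IsComponent e p) (hq : IsComponent e q) :
    IsComponent e (p ⊓ q) := by
  have := (hp.compl.sup hq.compl).compl
  rwa [← sub_inf, sub_sub_cancel] at this

/-- The type of components of `e`. -/
def Comp (e : E) := {p : E // IsComponent e p}

theorem comp_lub {e : E} (he : 0 ≤ e) (D : Set (Comp e)) :
    ∃ s : Comp e, ∀ t : Comp e, s.1 ≤ t.1 ↔ ∀ p ∈ D, p.1 ≤ t.1 := by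
  have hz : IsComponent e (0 : E) := by rw [isComponent_iff]; simpa using he
  have hb : BddAbove (insert 0 (Subtype.val '' D)) := ⟨e, by
    rintro x (rfl | ⟨p, -, rfl⟩)
    · exact he
    · exact p.2.2.1⟩
  have hl := isLUB_csSup (Set.insert_nonempty _ _) hb
  refine ⟨⟨sSup (insert 0 (Subtype.val '' D)), IsComponent.of_lub hl (hl.1 (by simp)) ?_
    (hl.2 ?_)⟩, ?_⟩
  · rintro x (rfl | ⟨p, -, rfl⟩)
    · exact hz
    · exact p.2
  · rintro x (rfl | ⟨p, -, rfl⟩)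
    · exact he
    · exact p.2.2.1
  · intro t
    refine ⟨fun h p hp => (hl.1 (by right; exact ⟨p, hp, rfl⟩)).trans h, fun h => hl.2 ?_⟩
    rintro x (rfl | ⟨p, hp, rfl⟩)
    · exact t.2.1
    · exact h p hp

/-- The complete Boolean algebra of components of `e`. -/
abbrev compBA {e : E} (he : 0 ≤ e) : CompleteBooleanAlgebra (Comp e) :=
  letI : PartialOrder (Comp e) := Subtype.partialOrder _
  letI : SupSet (Comp e) := ⟨fun D => (comp_lub he D).choose⟩
  letI CL : CompleteLattice (Comp e) := completeLatticeOfSup (Comp e) (fun D =>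
    isLUB_iff_le_iff.2 fun t => (comp_lub he D).choose_spec t)
  { CL with
    sup := fun p q => ⟨p.1 ⊔ q.1, p.2.sup q.2⟩
    inf := fun p q => ⟨p.1 ⊓ q.1, p.2.inf q.2⟩
    le_sup_left := fun p q => show p.1 ≤ p.1 ⊔ q.1 from le_sup_left
    le_sup_right := fun p q => show q.1 ≤ p.1 ⊔ q.1 from le_sup_right
    sup_le := fun p q r h1 h2 => show p.1 ⊔ q.1 ≤ r.1 from sup_le h1 h2
    inf_le_left := fun p q => show p.1 ⊓ q.1 ≤ p.1 from inf_le_left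
    inf_le_right := fun p q => show p.1 ⊓ q.1 ≤ q.1 from inf_le_right
    le_inf := fun p q r h1 h2 => show p.1 ≤ q.1 ⊓ r.1 from le_inf h1 h2
    top := ⟨e, by rw [isComponent_iff]; simpa using he⟩
    bot := ⟨0, by rw [isComponent_iff]; simpa using he⟩
    le_top := fun p => show p.1 ≤ e from p.2.2.1
    bot_le := fun p => show 0 ≤ p.1 from p.2.1
    compl := fun p => ⟨e - p.1, p.2.compl⟩
    le_sup_inf := fun p q r => by
      letI := AddCommGroup.toDistribLattice E
      exact show (p.1 ⊔ q.1) ⊓ (p.1 ⊔ r.1) ≤ p.1 ⊔ (q.1 ⊓ r.1) from le_sup_inf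
    inf_compl_le_bot := fun p => show p.1 ⊓ (e - p.1) ≤ 0 from (isComponent_iff.1 p.2).le
    top_le_sup_compl := fun p => show e ≤ p.1 ⊔ (e - p.1) by
      have := inf_add_sup p.1 (e - p.1)
      rw [isComponent_iff.1 p.2, zero_add] at this
      rw [this]; simp }

end RieszAux

section BandAux

variable {E : Type*} [ConditionallyCompleteLattice E] [AddCommGroup E] [IsOrderedAddMonoid E]
  [Module ℝ E] [PosSMulMono ℝ E]

theorem aux_abs_smul_le (c : ℝ) (x : E) : ∃ m : ℕ, |c • x| ≤ m • |x| := by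
  obtain ⟨m, hm⟩ := exists_nat_ge |c|
  refine ⟨m, ?_⟩
  have h1 : |c • x| ≤ |c| • |x| := by
    have h0 := abs_nonneg c
    have hp : ∀ y : E, y ≤ |x| → |c| • y ≤ |c| • |x| := fun y hy => smul_le_smul_of_nonneg_left hy h0
    have ha := hp x (le_abs_self x)
    have hb := hp (-x) (neg_le_abs x)
    rw [smul_neg] at hb
    rcases abs_cases c with ⟨hc, -⟩ | ⟨hc, -⟩
    · rw [hc] at ha hb ⊢; exact abs_le'.2 ⟨ha, hb⟩
    · rw [hc] at ha hb ⊢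
      rw [neg_smul, neg_neg] at hb
      rw [neg_smul c x] at ha
      exact abs_le'.2 ⟨hb, ha⟩
  have h2 : 0 ≤ ((m : ℝ) - |c|) • |x| := smul_nonneg (sub_nonneg.2 hm) (abs_nonneg x)
  rw [sub_smul, sub_nonneg, Nat.cast_smul_eq_nsmul] at h2
  exact h1.trans h2

/-- The disjoint complement of a positive element. -/
def disjSub (Q : E) (hQ : 0 ≤ Q) : Submodule ℝ E where
  carrier := {x | |x| ⊓ Q = 0}
  zero_mem' := by simpa using hQ
  add_mem' := by
    intro a b ha hb
    exact aux_disj_mono (abs_nonneg _) hQ (abs_add_le a b) le_rfl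
      (aux_disj_add (abs_nonneg a) (abs_nonneg b) hQ ha hb)
  smul_mem' := by
    intro c x hx
    obtain ⟨m, hm⟩ := aux_abs_smul_le c x
    exact aux_disj_mono (abs_nonneg _) hQ hm le_rfl (aux_disj_nsmul (abs_nonneg x) hQ hx m)

theorem band_decomp {e P f : E} (hP : IsComponent e P) (hf : 0 ≤ f) :
    ∃ a b : E, 0 ≤ a ∧ 0 ≤ b ∧ f = a + b ∧ a ⊓ (e - P) = 0 ∧ b ⊓ P = 0 := by
  have hP0 := hP.1
  have hQ0 : 0 ≤ e - P := sub_nonneg.2 hP.2.1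
  have hb : BddAbove (Set.range fun m : ℕ => f ⊓ m • P) := ⟨f, by
    rintro x ⟨m, rfl⟩; exact inf_le_left⟩
  have hl := isLUB_csSup (Set.range_nonempty _) hb
  set a := sSup (Set.range fun m : ℕ => f ⊓ m • P)
  have hla : ∀ m : ℕ, f ⊓ m • P ≤ a := fun m => hl.1 ⟨m, rfl⟩
  have ha : 0 ≤ a := by
    have := hla 0
    rwa [zero_nsmul, inf_eq_right.2 hf] at this
  have haf : a ≤ f := hl.2 (by rintro x ⟨m, rfl⟩; exact inf_le_left)
  refine ⟨a, f - a, ha, sub_nonneg.2 haf, by abel, ?_, ?_⟩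
  · refine aux_disj_lub hl ha hQ0 ?_
    rintro x ⟨m, rfl⟩
    have h1 := aux_disj_nsmul hP0 hQ0 (isComponent_iff.1 hP) m
    exact aux_disj_mono (le_inf hf (nsmul_nonneg hP0 m)) hQ0 inf_le_right le_rfl h1
  · set d := (f - a) ⊓ P with hd
    have hd0 : 0 ≤ d := le_inf (sub_nonneg.2 haf) hP0
    have : a ≤ a - d := by
      refine hl.2 ?_
      rintro x ⟨m, rfl⟩
      rw [le_sub_iff_add_le]
      refine le_trans (le_inf ?_ ?_) (hla (m + 1))
      · calc f ⊓ m • P + d ≤ a + (f - a) := add_le_add (hla m) inf_le_left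
          _ = f := by abel
      · rw [succ_nsmul]; exact add_le_add inf_le_right inf_le_right
    refine le_antisymm ?_ hd0
    simpa using this

theorem exists_bandProj {e : E} (he : WeakOrderUnit e) {P : E} (hP : IsComponent e P) :
    ∃ J : E →ₗ[ℝ] E, (∀ f, |J f| ⊓ (e - P) = 0) ∧ (∀ f, |f - J f| ⊓ P = 0) ∧
      (∀ f, |f| ⊓ (e - P) = 0 → J f = f) ∧ (∀ f, |f| ⊓ P = 0 → J f = 0) ∧
      (∀ f, 0 ≤ f → 0 ≤ J f) ∧ (∀ f, 0 ≤ f → J f ≤ f) := by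
  have hP0 := hP.1
  have hQ0 : 0 ≤ e - P := sub_nonneg.2 hP.2.1
  have hc : IsCompl (disjSub (e - P) hQ0) (disjSub P hP0) := by
    constructor
    · rw [Submodule.disjoint_def]
      intro x h1 h2
      apply he.2
      have h1' : |x| ⊓ (e - P) = 0 := h1
      have h2' : |x| ⊓ P = 0 := h2
      rw [inf_comm] at h1' h2'
      have := aux_disj_add hQ0 hP0 (abs_nonneg x) h1' h2'
      rwa [sub_add_cancel] at this
    · rw [codisjoint_iff, eq_top_iff]
      have hpos : ∀ f : E, 0 ≤ f → f ∈ disjSub (e - P) hQ0 ⊔ disjSub P hP0 := by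
        intro f hf
        obtain ⟨a, b, ha, hb, rfl, h1, h2⟩ := band_decomp hP hf
        refine Submodule.add_mem_sup ?_ ?_
        · show |a| ⊓ (e - P) = 0
          rwa [abs_of_nonneg ha]
        · show |b| ⊓ P = 0
          rwa [abs_of_nonneg hb]
      intro f _
      rw [← posPart_sub_negPart f]
      exact Submodule.sub_mem _ (hpos _ (posPart_nonneg f)) (hpos _ (negPart_nonneg f))
  have hdec : ∀ f : E, 0 ≤ f → ∃ b : E, 0 ≤ b ∧
      0 ≤ (disjSub (e - P) hQ0).projection _ hc f ∧
      f = (disjSub (e - P) hQ0).projection _ hc f + b := by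
    intro f hf
    obtain ⟨a, b, ha, hb, rfl, h1, h2⟩ := band_decomp hP hf
    have ha' : a ∈ disjSub (e - P) hQ0 := by
      show |a| ⊓ (e - P) = 0
      rwa [abs_of_nonneg ha]
    have hb' : b ∈ disjSub P hP0 := by
      show |b| ⊓ P = 0
      rwa [abs_of_nonneg hb]
    refine ⟨b, hb, ?_⟩
    rw [map_add, Submodule.projection_apply_of_mem_left hc ha',
      Submodule.projection_apply_of_mem_right hc hb', add_zero]
    exact ⟨ha, rfl⟩
  refine ⟨(disjSub (e - P) hQ0).projection _ hc, ?_, ?_, ?_, ?_, ?_, ?_⟩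
  · intro f; exact Submodule.projection_apply_mem hc f
  · intro f
    have : f - (disjSub (e - P) hQ0).projection _ hc f ∈ disjSub P hP0 := by
      rw [← Submodule.projection_apply_eq_zero_iff hc, map_sub, sub_eq_zero]
      exact (Submodule.projection_apply_of_mem_left hc (Submodule.projection_apply_mem hc f)).symm
    exact this
  · intro f hf; exact Submodule.projection_apply_of_mem_left hc hf
  · intro f hf; exact Submodule.projection_apply_of_mem_right hc hf
  · intro f hf; exact (hdec f hf).choose_spec.2.1
  · intro f hf
    obtain ⟨b, hb, -, h⟩ := hdec f hf
    conv_rhs => rw [h]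
    simpa using hb

end BandAux

section AlgAux

variable {R M : Type*} [Ring R] [AddCommGroup M] [Module R M]

/-- Periodic modification of `S` along a tower. -/
def towerMap (S L : M →ₗ[R] M) (J : ℕ → M →ₗ[R] M) (m : ℕ) : M →ₗ[R] M :=
  ∑ i ∈ Finset.range m, S ∘ₗ J i + (L ^ m) ∘ₗ J m +
    (LinearMap.id - ∑ i ∈ Finset.range (m + 1), J i)

theorem towerMap_apply (S L : M →ₗ[R] M) (J : ℕ → M →ₗ[R] M) (m : ℕ) (f : M) :
    towerMap S L J m f = ∑ i ∈ Finset.range m, S (J i f) + (L ^ m) (J m f) +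
    (f - ∑ i ∈ Finset.range (m + 1), J i f) := by
  simp [towerMap, LinearMap.sum_apply]

theorem towerMap_pow (S L : M →ₗ[R] M) (J : ℕ → M →ₗ[R] M) (m : ℕ)
    (hSL : ∀ f, S (L f) = f) (hLS : ∀ f, L (S f) = f)
    (hJJ : ∀ i ≤ m, ∀ f, J i (J i f) = J i f)
    (hJ0 : ∀ i ≤ m, ∀ j ≤ m, i ≠ j → ∀ f, J i (J j f) = 0)
    (hJS : ∀ i < m, ∀ f, J (i + 1) (S f) = S (J i f)) (f : M) :
    (towerMap S L J m ^ (m + 1)) f = f := by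
  set S' := towerMap S L J m with hS'
  have hSLp : ∀ i f, (S ^ i) ((L ^ i) f) = f := by
    intro i
    induction i with
    | zero => intro f; simp
    | succ i ih => intro f; rw [pow_succ, pow_succ']; simp only [Module.End.mul_apply]; rw [hSL, ih]
  have hLSp : ∀ i f, (L ^ i) ((S ^ i) f) = f := by
    intro i
    induction i with
    | zero => intro f; simp
    | succ i ih => intro f; rw [pow_succ, pow_succ']; simp only [Module.End.mul_apply]; rw [hLS, ih]
  have hz : ∀ i ≤ m, ∀ f, J i f = f → ∀ j ≤ m, j ≠ i → J j f = 0 := by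
    intro i hi f hf j hj hji
    rw [← hf]; exact hJ0 j hj i hi hji f
  have hsum : ∀ i ≤ m, ∀ f, J i f = f → ∑ j ∈ Finset.range (m + 1), J j f = f := by
    intro i hi f hf
    rw [Finset.sum_eq_single_of_mem i (by simp; omega), hf]
    intro j hj hji
    exact hz i hi f hf j (by simp at hj; omega) hji
  have hlow : ∀ i < m, ∀ f, J i f = f → S' f = S f := by
    intro i hi f hf
    rw [hS', towerMap_apply, hsum i hi.le f hf, hz i hi.le f hf m le_rfl (by omega),
      Finset.sum_eq_single_of_mem i (by simpa using hi), hf]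
    · simp
    · intro j hj hji
      rw [hz i hi.le f hf j (by simp at hj; omega) hji, map_zero]
  have htop : ∀ f, J m f = f → S' f = (L ^ m) f := by
    intro f hf
    rw [hS', towerMap_apply, hsum m le_rfl f hf, hf, Finset.sum_eq_zero]
    · simp
    · intro j hj
      simp at hj
      rw [hz m le_rfl f hf j (by omega) (by omega), map_zero]
  have hJSp : ∀ i ≤ m, ∀ f, J i ((S ^ i) f) = (S ^ i) (J 0 f) := by
    intro i
    induction i with
    | zero => intro _ f; simp
    | succ i ih =>
      intro hi f
      rw [pow_succ', Module.End.mul_apply, Module.End.mul_apply, hJS i (by omega), ih (by omega)]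
  have hpow : ∀ f, J 0 f = f → ∀ i ≤ m, (S' ^ i) f = (S ^ i) f := by
    intro f hf i
    induction i with
    | zero => intro _; simp
    | succ i ih =>
      intro hi
      rw [pow_succ', Module.End.mul_apply, ih (by omega), pow_succ', Module.End.mul_apply]
      exact hlow i (by omega) _ (by rw [hJSp i (by omega), hf])
  have hbase : ∀ f, J 0 f = f → (S' ^ (m + 1)) f = f := by
    intro f hf
    rw [pow_succ', Module.End.mul_apply, hpow f hf m le_rfl,
      htop _ (by rw [hJSp m le_rfl, hf]), hLSp]
  have hlev : ∀ i ≤ m, ∀ f, J i f = f → (S' ^ (m + 1)) f = f := by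
    intro i hi f hf
    have hg : J 0 ((L ^ i) f) = (L ^ i) f := by
      have := hJSp i hi ((L ^ i) f)
      rw [hSLp, hf] at this
      rw [this, hLSp]
      exact hJJ 0 (by omega) _
    have h1 : f = (S' ^ i) ((L ^ i) f) := by rw [hpow _ hg i hi, hSLp]
    conv_lhs => rw [h1]
    rw [← Module.End.mul_apply, ← pow_add, add_comm, pow_add, Module.End.mul_apply, hbase _ hg, ← h1]
  have hrem : ∀ g, (∀ i ≤ m, J i g = 0) → (S' ^ (m + 1)) g = g := by
    intro g hg
    have h1 : S' g = g := by
      rw [hS', towerMap_apply, hg m le_rfl, Finset.sum_eq_zero, Finset.sum_eq_zero]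
      · simp
      · intro i hi; exact hg i (by simp at hi; omega)
      · intro i hi; rw [hg i (by simp at hi; omega), map_zero]
    generalize m + 1 = k
    induction k with
    | zero => simp
    | succ k ih => rw [pow_succ, Module.End.mul_apply, h1, ih]
  have hf : f = ∑ i ∈ Finset.range (m + 1), J i f + (f - ∑ i ∈ Finset.range (m + 1), J i f) := by
    abel
  conv_lhs => rw [hf]
  rw [map_add, map_sum, hrem, Finset.sum_congr rfl, ← hf]
  · intro i hi
    exact hlev i (by simp at hi; omega) _ (hJJ i (by simp at hi; omega) f)
  · intro i hi
    rw [map_sub, map_sum, Finset.sum_eq_single_of_mem i (by simp; omega), hJJ i hi, sub_self]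
    intro j hj hji
    exact hJ0 i hi j (by simp at hj; omega) hji.symm f

end AlgAux

section TowerAux

variable {E : Type*} [ConditionallyCompleteLattice E] [AddCommGroup E] [IsOrderedAddMonoid E]
  [Module ℝ E]

theorem hom_inf {S : E →ₗ[ℝ] E} (h : ∀ x y, S (x ⊔ y) = S x ⊔ S y) (x y : E) :
    S (x ⊓ y) = S x ⊓ S y := by
  have := h (-x) (-y)
  rw [← neg_inf, map_neg, map_neg, map_neg, ← neg_inf] at this
  exact neg_injective this

theorem hom_mono {S : E →ₗ[ℝ] E} (h : ∀ x y, S (x ⊔ y) = S x ⊔ S y) {x y : E} (hxy : x ≤ y) :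
    S x ≤ S y := by
  rw [← sup_eq_right.2 hxy, h]; exact le_sup_left

theorem hom_abs {S : E →ₗ[ℝ] E} (h : ∀ x y, S (x ⊔ y) = S x ⊔ S y) (x : E) :
    S |x| = |S x| := by
  have := h x (-x)
  rwa [map_neg] at this

theorem hom_pow {S : E →ₗ[ℝ] E} (h : ∀ x y, S (x ⊔ y) = S x ⊔ S y) (k : ℕ) :
    ∀ x y, (S ^ k) (x ⊔ y) = (S ^ k) x ⊔ (S ^ k) y := by
  induction k with
  | zero => intro x y; simp
  | succ k ih => intro x y; rw [pow_succ]; simp only [Module.End.mul_apply]; rw [h, ih]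

theorem fix_pow {S : E →ₗ[ℝ] E} {e : E} (h : S e = e) (k : ℕ) : (S ^ k) e = e := by
  induction k with
  | zero => simp
  | succ k ih => rw [pow_succ, Module.End.mul_apply, h, ih]

theorem hom_comp {S : E →ₗ[ℝ] E} (h : ∀ x y, S (x ⊔ y) = S x ⊔ S y) {e p : E} (hSe : S e = e)
    (hp : IsComponent e p) : IsComponent e (S p) := by
  rw [isComponent_iff] at *
  rw [← map_zero S, ← hp, hom_inf h, map_sub, hSe]

theorem riesz_tower (S L : E →ₗ[ℝ] E) (hSL : ∀ f, S (L f) = f) (hLS : ∀ f, L (S f) = f)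
    (hS : ∀ x y, S (x ⊔ y) = S x ⊔ S y) (hL : ∀ x y, L (x ⊔ y) = L x ⊔ L y) (e : E) (he : 0 ≤ e)
    (hSe : S e = e) (hLe : L e = e) (n N : ℕ) (hn : 1 ≤ n)
    (hfree : ∀ c, IsComponent e c → c ≠ 0 → ∃ w, IsComponent e w ∧ w ≤ c ∧ w ≠ 0 ∧
      ∀ j, 1 ≤ j → j < N → w ⊓ (S ^ j) w = 0)
    (hcons : ∀ b, IsComponent e b → L b ≤ b → L b = b) :
    ∃ A G : E, IsComponent e A ∧ IsComponent e G ∧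
      (∀ j, 1 ≤ j → j < N → A ⊓ (S ^ j) A = 0) ∧
      (∀ i < n, ∀ j < n, i ≠ j → (S ^ i) G ⊓ (S ^ j) G = 0) ∧
      e ≤ ∑ i ∈ Finset.range n, (S ^ i) G + ∑ i ∈ Finset.range n, (S ^ (i + 1)) A := by
  letI := compBA he
  let s : Comp e ≃o Comp e :=
    { toFun := fun p => ⟨S p.1, hom_comp hS hSe p.2⟩
      invFun := fun p => ⟨L p.1, hom_comp hL hLe p.2⟩
      left_inv := fun p => Subtype.ext (hLS p.1)
      right_inv := fun p => Subtype.ext (hSL p.1)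
      map_rel_iff' := by
        intro p q
        show S p.1 ≤ S q.1 ↔ p.1 ≤ q.1
        refine ⟨fun h => ?_, hom_mono hS⟩
        have := hom_mono hL h
        rwa [hLS, hLS] at this }
  have hs : ∀ (k : ℕ) (p : Comp e), ((s ^ k) p).1 = (S ^ k) p.1 := by
    intro k
    induction k with
    | zero => intro p; rfl
    | succ k ih =>
      intro p
      rw [pow_succ, pow_succ, RelIso.mul_apply, ih]; rfl
  have hdis : ∀ p q : Comp e, Disjoint p q ↔ p.1 ⊓ q.1 = 0 := by
    intro p q
    rw [disjoint_iff]
    exact Subtype.ext_iff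
  obtain ⟨A, hA1, hA2⟩ := rokhlin_free s N (by
    intro c hc
    obtain ⟨w, hw, hwc, hw0, hd⟩ := hfree c.1 c.2 (fun h => hc (Subtype.ext h))
    refine ⟨(⟨w, hw⟩ : Comp e), hwc, fun h => hw0 (Subtype.ext_iff.1 h), fun j h1 h2 => ?_⟩
    refine (hdis _ _).2 ?_
    exact (congrArg (fun z => w ⊓ z) (hs j (⟨w, hw⟩ : Comp e))).trans (hd j h1 h2)) (by
    intro b hb
    exact Subtype.ext (hcons b.1 b.2 hb))
  obtain ⟨G, hG1, hG2⟩ := rokhlin_tower s n hn A hA2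
  refine ⟨A.1, G.1, A.2, G.2, ?_, ?_, ?_⟩
  · intro j h1 h2
    rw [← hs, ← hdis]; exact hA1 j h1 h2
  · intro i hi j hj hij
    rw [← hs, ← hs, ← hdis]; exact hG1 i hi j hj hij
  · have hsum : ∀ (k : ℕ) (x : ℕ → Comp e), ((Finset.range k).sup x).1 ≤
        ∑ i ∈ Finset.range k, (x i).1 := by
      intro k x
      induction k with
      | zero => exact le_of_eq rfl
      | succ k ih =>
        rw [Finset.sum_range_succ, Finset.range_add_one, Finset.sup_insert]
        have h0 : 0 ≤ ∑ i ∈ Finset.range k, (x i).1 := Finset.sum_nonneg fun i _ => (x i).2.1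
        refine sup_le (a := (x k).1) ?_ (ih.trans ?_)
        · simpa using h0
        · simpa using (x k).2.1
    have h1 := hsum n (fun i => (s ^ i) G)
    have h2 := hsum n (fun i => (s ^ (i + 1)) A)
    simp only [hs] at h1 h2
    have h3 : e ≤ ((Finset.range n).sup (fun i => (s ^ i) G)).1 ⊔
        ((Finset.range n).sup (fun i => (s ^ (i + 1)) A)).1 := hG2
    refine h3.trans (sup_le ?_ ?_)
    · refine (h1.trans ?_)
      have : 0 ≤ ∑ i ∈ Finset.range n, (S ^ (i + 1)) A.1 :=
        Finset.sum_nonneg fun i _ => by rw [← hs]; exact (Subtype.prop _ : IsComponent e _).1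
      simpa using this
    · refine (h2.trans ?_)
      have : 0 ≤ ∑ i ∈ Finset.range n, (S ^ i) G.1 :=
        Finset.sum_nonneg fun i _ => by rw [← hs]; exact (Subtype.prop _ : IsComponent e _).1
      simpa using this

end TowerAux

theorem le_partialSup_aux {E : Type*} [Lattice E] [Zero E] (f : ℕ → E) {i n : ℕ} (h : i < n) :
    f i ≤ partialSup f n := by
  induction n with
  | zero => omega
  | succ n ih =>
    rw [partialSup]
    rcases Nat.lt_succ_iff_lt_or_eq.1 h with h | rfl
    · exact (ih h).trans le_sup_left
    · exact le_sup_right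

theorem partialSup_ind_aux {E : Type*} [Lattice E] [Zero E] (p : E → Prop) (f : ℕ → E)
    (h0 : p 0) (hs : ∀ x y, p x → p y → p (x ⊔ y)) (hf : ∀ i, p (f i)) (n : ℕ) :
    p (partialSup f n) := by
  induction n with
  | zero => exact h0
  | succ n ih => exact hs _ _ ih (hf n)

/-- **Approximation of aperiodic maps by periodic ones.** -/
theorem aperiodic_approx_periodic {E : Type*} [ConditionallyCompleteLattice E]
    [AddCommGroup E] [Module ℝ E] [CovariantClass E E (· + ·) (· ≤ ·)] [PosSMulMono ℝ E]
    (T S : E →ₗ[ℝ] E) (e : E) (hCEPS : IsCEPS T S e)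
    (hErg : {f : E | S f = f} = Set.range T)
    (hTuc : TUnivComplete T)
    (hS : Function.Surjective ⇑S)
    (hAp : IsAperiodic (Function.surjInv hS) e e)
    (ε : ℝ) (hε0 : 0 < ε) (hε1 : ε < 1) :
    ∃ S' : E →ₗ[ℝ] E, ∃ hS' : Function.Surjective ⇑S',
      IsCEPS T S' e ∧
      IsPeriodic (Function.surjInv hS') e ∧
      ∀ u : E, IsComponent e u →
        T ((S u - S' u) ⊔ -(S u - S' u)) ≤ ε • e := by
  haveI : IsOrderedAddMonoid E :=
    { add_le_add_left := fun a b h c => by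
        have h' : c + a ≤ c + b := CovariantClass.elim c h
        first
          | exact h'
          | (rw [add_comm a c, add_comm b c]; exact h') }
  have he0 : 0 ≤ e := hCEPS.unit.1.le
  have hSs := hCEPS.S_hom
  have hTS := hCEPS.TS
  have hTe := hCEPS.Te
  have hSe := hCEPS.Se
  have hTmono : ∀ x y : E, x ≤ y → T x ≤ T y := by
    intro x y h
    have := hCEPS.T_pos (y - x) (sub_nonneg.2 h)
    rwa [map_sub, sub_nonneg] at this
  have hinj : Function.Injective ⇑S := by
    rw [injective_iff_map_eq_zero]
    intro f hf
    have h1 : S |f| = 0 := by rw [hom_abs hSs, hf, abs_zero]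
    have h2 : |f| = 0 := hCEPS.T_strictPos _ (abs_nonneg f) (by rw [← hTS, h1, map_zero])
    have h3 := le_abs_self f
    have h4 := neg_le_abs f
    rw [h2] at h3 h4
    exact le_antisymm h3 (by simpa using h4)
  obtain ⟨L, hL⟩ : ∃ L : E →ₗ[ℝ] E, ∀ f, S (L f) = f :=
    ⟨(LinearEquiv.ofBijective S ⟨hinj, hS⟩).symm.toLinearMap, fun f =>
      (LinearEquiv.ofBijective S ⟨hinj, hS⟩).apply_symm_apply f⟩
  have hLS : ∀ f, L (S f) = f := fun f => hinj (hL _)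
  have hLs : ∀ x y, L (x ⊔ y) = L x ⊔ L y := fun x y => hinj (by rw [hSs, hL, hL, hL])
  have hLe : L e = e := hinj (by rw [hL, hSe])
  have hTL : ∀ f, T (L f) = T f := fun f => by rw [← hTS, hL]
  have hinv : Function.surjInv hS = ⇑L := by
    funext f; exact hinj (by rw [Function.surjInv_eq hS, hL])
  have hTSp : ∀ k f, T ((S ^ k) f) = T f := by
    intro k
    induction k with
    | zero => intro f; simp
    | succ k ih => intro f; rw [pow_succ, Module.End.mul_apply, ih, hTS]
  have hTLp : ∀ k f, T ((L ^ k) f) = T f := by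
    intro k
    induction k with
    | zero => intro f; simp
    | succ k ih => intro f; rw [pow_succ, Module.End.mul_apply, ih, hTL]
  have hSLp : ∀ i f, (S ^ i) ((L ^ i) f) = f := by
    intro i
    induction i with
    | zero => intro f; simp
    | succ i ih => intro f; rw [pow_succ, pow_succ']; simp only [Module.End.mul_apply]; rw [hL, ih]
  have hzc : IsComponent e (0 : E) := by rw [isComponent_iff]; simpa using he0
  -- parameters
  obtain ⟨n, hn⟩ := exists_nat_ge (4 / ε)
  have hn4 : 4 ≤ n * ε := by rwa [div_le_iff₀ hε0] at hn
  have hn1 : 1 ≤ n := by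
    rcases Nat.eq_zero_or_pos n with h | h
    · rw [h] at hn4; norm_num at hn4
    · exact h
  have hfree : ∀ c, IsComponent e c → c ≠ 0 → ∃ w, IsComponent e w ∧ w ≤ c ∧ w ≠ 0 ∧
      ∀ j, 1 ≤ j → j < n * n → w ⊓ (S ^ j) w = 0 := by
    intro c hc hc0
    obtain ⟨k, hk, u, hu, hq⟩ := hAp (n * n) c hc hc0
    rw [hinv] at hq
    have hue : IsComponent e u := hc.trans hu
    have hcomp : ∀ j, IsComponent e ((⇑L)^[j] u) := by
      intro j
      rw [← Module.End.pow_apply]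
      exact hom_comp (hom_pow hLs j) (fix_pow hLe j) hue
    have hps : IsComponent e (partialSup (fun j => (⇑L)^[j + 1] u) (k - 1)) :=
      partialSup_ind_aux (IsComponent e) _ hzc (fun _ _ h1 h2 => h1.sup h2)
        (fun i => hcomp (i + 1)) _
    have hw : IsComponent e (qComp (⇑L) e u k) := (hue.inf (hcomp k)).inf hps.compl
    have hwu : qComp (⇑L) e u k ≤ u := inf_le_left.trans inf_le_left
    refine ⟨qComp (⇑L) e u k, hw, hwu.trans hu.2.1, hq, ?_⟩
    intro j hj1 hj2
    set w := qComp (⇑L) e u k with hwdef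
    have h1 : (L ^ j) u ≤ partialSup (fun j => (⇑L)^[j + 1] u) (k - 1) := by
      have := le_partialSup_aux (fun j => (⇑L)^[j + 1] u) (show j - 1 < k - 1 by omega)
      simp only [show j - 1 + 1 = j by omega] at this
      rwa [Module.End.pow_apply]
    have h2 : w ≤ e - (L ^ j) u := inf_le_right.trans (sub_le_sub_left h1 e)
    have h3 : (L ^ j) w ≤ (L ^ j) u := hom_mono (hom_pow hLs j) hwu
    have hLw := hom_comp (hom_pow hLs j) (fix_pow hLe j) hw
    have hLu := hom_comp (hom_pow hLs j) (fix_pow hLe j) hue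
    have h4 : w ⊓ (L ^ j) w = 0 := aux_disj_mono hw.1 hLw.1 h2 h3 hLu.2.2
    have h5 := congrArg (S ^ j) h4
    rw [hom_inf (hom_pow hSs j), hSLp, map_zero, inf_comm] at h5
    exact h5
  have hcons : ∀ b, IsComponent e b → L b ≤ b → L b = b := by
    intro b _ hb
    have := hCEPS.T_strictPos (b - L b) (sub_nonneg.2 hb) (by rw [map_sub, hTL, sub_self])
    exact (sub_eq_zero.1 this).symm
  obtain ⟨A, G, hA, hG, hAd, hGd, hcov⟩ :=
    riesz_tower S L hL hLS hSs hLs e he0 hSe hLe n (n * n) hn1 hfree hcons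
  have hSc : ∀ i p, IsComponent e p → IsComponent e ((S ^ i) p) := fun i p hp =>
    hom_comp (hom_pow hSs i) (fix_pow hSe i) hp
  -- measure bounds
  have hTG : n • T G ≤ e := by
    have h := hTmono _ _ (aux_sum_le_of_disj he0 n (fun i _ => (hSc i G hG).1)
      (fun i _ => (hSc i G hG).2.1) hGd)
    rw [map_sum, hTe] at h
    simpa [hTSp] using h
  have hTA : (n * n) • T A ≤ e := by
    have hd' : ∀ i j, i < j → j < n * n → (S ^ i) A ⊓ (S ^ j) A = 0 := by
      intro i j hij hj
      have h1 := congrArg (S ^ i) (hAd (j - i) (by omega) (by omega))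
      rw [hom_inf (hom_pow hSs i), map_zero, ← Module.End.mul_apply, ← pow_add,
        show i + (j - i) = j by omega] at h1
      exact h1
    have h := hTmono _ _ (aux_sum_le_of_disj he0 (n * n) (fun i _ => (hSc i A hA).1)
      (fun i _ => (hSc i A hA).2.1) (by
        intro i hi j hj hij
        rcases lt_or_gt_of_ne hij with h | h
        · exact hd' i j h hj
        · rw [inf_comm]; exact hd' j i h hi))
    rw [map_sum, hTe] at h
    simpa [hTSp] using h
  obtain ⟨m, rfl⟩ : ∃ m, n = m + 1 := ⟨n - 1, by omega⟩
  -- band projections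
  have hPc : ∀ i, IsComponent e ((S ^ i) G) := fun i => hSc i G hG
  choose J hJa hJb hJc hJd hJpos hJle using fun i => exists_bandProj hCEPS.unit (hPc i)
  have hPS : ∀ i, (S ^ (i + 1)) G = S ((S ^ i) G) := fun i => by
    rw [pow_succ', Module.End.mul_apply]
  have hJJ : ∀ i ≤ m, ∀ f, J i (J i f) = J i f := fun i _ f => hJc i _ (hJa i f)
  have hJ0 : ∀ i ≤ m, ∀ j ≤ m, i ≠ j → ∀ f, J i (J j f) = 0 := by
    intro i hi j hj hij f
    refine hJd i _ (aux_disj_mono (abs_nonneg _) (hPc i).1 le_rfl ?_ (hJa j f))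
    rw [le_sub_iff_add_le]
    exact aux_add_le_of_disj (hGd i (by omega) j (by omega) hij) (hPc i).2.1 (hPc j).2.1
  have hJS : ∀ i < m, ∀ f, J (i + 1) (S f) = S (J i f) := by
    intro i _ f
    have h1 : J (i + 1) (S (J i f)) = S (J i f) := by
      apply hJc
      rw [hPS, ← hom_abs hSs]
      conv_lhs => rw [← hSe]
      rw [← map_sub, ← hom_inf hSs, hJa, map_zero]
    have h2 : J (i + 1) (S (f - J i f)) = 0 := by
      apply hJd
      rw [hPS, ← hom_abs hSs, ← hom_inf hSs, hJb, map_zero]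
    rw [map_sub, map_sub, h1, sub_eq_zero] at h2
    exact h2
  have hJe : ∀ i, J i e = (S ^ i) G := by
    intro i
    have h1 : J i ((S ^ i) G) = (S ^ i) G := by
      apply hJc; rw [abs_of_nonneg (hPc i).1]; exact isComponent_iff.1 (hPc i)
    have h2 : J i (e - (S ^ i) G) = 0 := by
      apply hJd; rw [abs_of_nonneg (sub_nonneg.2 (hPc i).2.1)]; exact (hPc i).2.2
    rw [map_sub, h1, sub_eq_zero] at h2
    exact h2
  have hRpos : ∀ f, 0 ≤ f → 0 ≤ f - ∑ i ∈ Finset.range (m + 1), J i f := by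
    intro f hf
    have key : ∀ k ≤ m + 1, 0 ≤ f - ∑ i ∈ Finset.range k, J i f := by
      intro k
      induction k with
      | zero => intro _; simpa using hf
      | succ k ih =>
        intro hk
        have h1 := hJle k _ (ih (by omega))
        rw [map_sub, map_sum, Finset.sum_eq_zero, sub_zero] at h1
        · rw [Finset.sum_range_succ, ← sub_sub]; exact sub_nonneg.2 h1
        · intro i hi
          simp only [Finset.mem_range] at hi
          exact hJ0 k (by omega) i (by omega) (by omega) f
    exact key _ le_rfl
  have hpowpos : ∀ k f, 0 ≤ f → 0 ≤ (L ^ k) f := by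
    intro k f hf
    have := hom_mono (hom_pow hLs k) hf
    rwa [map_zero] at this
  have hSpos : ∀ f, 0 ≤ f → 0 ≤ S f := by
    intro f hf
    have := hom_mono hSs hf
    rwa [map_zero] at this
  have hpow : ∀ f, (towerMap S L J m ^ (m + 1)) f = f :=
    towerMap_pow S L J m hL hLS hJJ hJ0 hJS
  have hS'a := towerMap_apply S L J m
  set S' := towerMap S L J m with hS'def
  have hS'pos : ∀ f, 0 ≤ f → 0 ≤ S' f := by
    intro f hf
    rw [hS'a]
    exact add_nonneg (add_nonneg (Finset.sum_nonneg fun i _ => hSpos _ (hJpos i f hf))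
      (hpowpos m _ (hJpos m f hf))) (hRpos f hf)
  have hS'mono : ∀ x y, x ≤ y → S' x ≤ S' y := by
    intro x y h
    have := hS'pos (y - x) (sub_nonneg.2 h)
    rwa [map_sub, sub_nonneg] at this
  have hS'pmono : ∀ k x y, x ≤ y → (S' ^ k) x ≤ (S' ^ k) y := by
    intro k
    induction k with
    | zero => intro x y h; simpa using h
    | succ k ih =>
      intro x y h
      rw [pow_succ, Module.End.mul_apply, Module.End.mul_apply]; exact ih _ _ (hS'mono _ _ h)
  have hr : ∀ f, S' ((S' ^ m) f) = f := fun f => by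
    rw [← Module.End.mul_apply, ← pow_succ', hpow]
  have hl : ∀ f, (S' ^ m) (S' f) = f := fun f => by
    rw [← Module.End.mul_apply, ← pow_succ, hpow]
  let o : E ≃o E :=
    { toFun := S'
      invFun := ⇑(S' ^ m)
      left_inv := hl
      right_inv := hr
      map_rel_iff' := by
        intro x y
        refine ⟨fun h => ?_, hS'mono x y⟩
        have h2 := hS'pmono m _ _ h
        simp only [Equiv.coe_fn_mk] at h2
        rwa [hl, hl] at h2 }
  have ho : ∀ f, o f = S' f := fun f => rfl
  have hsurj : Function.Surjective ⇑S' := fun f => ⟨_, hr f⟩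
  have hS'e : S' e = e := by
    rw [hS'a]
    simp only [hJe]
    have hLm : (L ^ m) ((S ^ m) G) = G := by
      have hi : Function.Injective ⇑(S ^ m) := by
        rw [Module.End.coe_pow]; exact hinj.iterate m
      exact hi (hSLp m _)
    rw [hLm, Finset.sum_range_succ' (fun i => (S ^ i) G) m]
    simp only [hPS, pow_zero, Module.End.one_apply]
    abel
  have hTS' : ∀ f, T (S' f) = T f := by
    intro f
    rw [hS'a, map_add, map_add, map_sub, map_sum, map_sum, hTLp, Finset.sum_range_succ]
    simp only [hTS]
    abel
  refine ⟨S', hsurj, ?_, ?_, ?_⟩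
  · exact
      { unit := hCEPS.unit
        T_pos := hCEPS.T_pos
        T_strictPos := hCEPS.T_strictPos
        T_proj := hCEPS.T_proj
        T_ordCont := hCEPS.T_ordCont
        T_range_sublattice := hCEPS.T_range_sublattice
        T_range_dedekind := hCEPS.T_range_dedekind
        T_weakUnit := hCEPS.T_weakUnit
        Te := hCEPS.Te
        S_hom := fun x y => o.map_sup x y
        S_ordCont := by
          intro D _ _ hD
          have h := (o.isGLB_image' (s := D) (x := 0)).2 hD
          rw [ho, map_zero] at h
          exact h
        Se := hS'e
        TS := hTS' }
  · refine ⟨m + 2, fun c hc _ _ k hk => ?_⟩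
    have hK : Function.surjInv hsurj = ⇑(S' ^ m) := by
      funext f
      exact o.injective (by rw [ho, ho, Function.surjInv_eq hsurj, hr])
    rw [hK]
    have hKe : (S' ^ m) e = e := by
      conv_lhs => rw [← hS'e]
      exact hl e
    have hb : ∀ j, 0 ≤ (⇑(S' ^ m))^[j] c ∧ (⇑(S' ^ m))^[j] c ≤ e := by
      intro j
      induction j with
      | zero => exact ⟨hc.1, hc.2.1⟩
      | succ j ih =>
        rw [Function.iterate_succ_apply']
        have h1 := hS'pmono m _ _ ih.1
        have h2 := hS'pmono m _ _ ih.2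
        rw [map_zero] at h1
        rw [hKe] at h2
        exact ⟨h1, h2⟩
    have hper : (⇑(S' ^ m))^[m + 1] c = c := by
      rw [← Module.End.pow_apply, ← pow_mul, mul_comm, pow_mul]
      have h1 : S' ^ (m + 1) = 1 := LinearMap.ext hpow
      rw [h1, one_pow, Module.End.one_apply]
    have hle : c ≤ partialSup (fun j => (⇑(S' ^ m))^[j + 1] c) (k - 1) := by
      have := le_partialSup_aux (fun j => (⇑(S' ^ m))^[j + 1] c) (show m < k - 1 by omega)
      simp only [hper] at this
      exact this
    have hge : partialSup (fun j => (⇑(S' ^ m))^[j + 1] c) (k - 1) ≤ e :=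
      partialSup_ind_aux (fun x => x ≤ e) _ he0 (fun _ _ h1 h2 => sup_le h1 h2)
        (fun i => (hb (i + 1)).2) _
    exact aux_disj_mono (le_inf hc.1 (hb k).1) (sub_nonneg.2 hge) inf_le_left
      (sub_le_sub_left hle e) (isComponent_iff.1 hc)
  · intro u hu
    set r := u - ∑ i ∈ Finset.range (m + 1), J i u with hrdef
    have hr0 : 0 ≤ r := hRpos u hu.1
    have hj0 : 0 ≤ J m u := hJpos m u hu.1
    have hSr : S u = ∑ i ∈ Finset.range m, S (J i u) + S (J m u) + S r := by
      rw [hrdef, map_sub, map_sum, Finset.sum_range_succ]; abel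
    have hdiff : S u - S' u = S (J m u) - (L ^ m) (J m u) + (S r - r) := by
      rw [hS'a, ← hrdef, hSr]; abel
    have ha0 := hSpos _ hj0
    have hb0 := hpowpos m _ hj0
    have hc0 := hSpos _ hr0
    have habs : (S u - S' u) ⊔ -(S u - S' u) ≤ S (J m u) + (L ^ m) (J m u) + (S r + r) := by
      rw [hdiff]
      generalize S (J m u) = a at *
      generalize (L ^ m) (J m u) = b at *
      generalize S r = c at *
      refine sup_le ?_ ?_
      · rw [← sub_nonneg]
        have : a + b + (c + r) - (a - b + (c - r)) = b + b + (r + r) := by abel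
        rw [this]
        exact add_nonneg (add_nonneg hb0 hb0) (add_nonneg hr0 hr0)
      · rw [← sub_nonneg]
        have : a + b + (c + r) - (-(a - b + (c - r))) = a + a + (c + c) := by abel
        rw [this]
        exact add_nonneg (add_nonneg ha0 ha0) (add_nonneg hc0 hc0)
    have hT1 := hTmono _ _ habs
    rw [map_add, map_add, map_add, hTS, hTS, hTLp] at hT1
    have hTj : T (J m u) ≤ T G := by
      rw [← hTSp m G, ← hJe]
      apply hTmono
      have := hJpos m (e - u) (sub_nonneg.2 hu.2.1)
      rwa [map_sub, sub_nonneg] at this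
    have hre : r ≤ ∑ i ∈ Finset.range (m + 1), (S ^ (i + 1)) A := by
      have h1 := hRpos (e - u) (sub_nonneg.2 hu.2.1)
      simp only [map_sub, Finset.sum_sub_distrib, hJe] at h1
      have h2 : r ≤ e - ∑ i ∈ Finset.range (m + 1), (S ^ i) G := by
        rw [← sub_nonneg]
        refine h1.trans_eq ?_
        rw [hrdef]; abel
      refine h2.trans ?_
      rw [sub_le_iff_le_add']
      exact hcov
    have hTr : T r ≤ (m + 1) • T A := by
      have h1 := hTmono _ _ hre
      rw [map_sum] at h1
      simpa [hTSp] using h1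
    have hnpos : (0 : ℝ) < ((m + 1 : ℕ) : ℝ) := by positivity
    have hscale : ∀ y : E, (m + 1) • y ≤ e → y ≤ (((m + 1 : ℕ) : ℝ)⁻¹) • e := by
      intro y hy
      have h1 := smul_le_smul_of_nonneg_left hy (inv_nonneg.2 hnpos.le)
      rwa [← Nat.cast_smul_eq_nsmul ℝ, smul_smul, inv_mul_cancel₀ hnpos.ne', one_smul] at h1
    have hy := hTj.trans (hscale _ hTG)
    have hz := hTr.trans (hscale _ (by rw [← mul_nsmul]; exact hTA))
    refine hT1.trans ((add_le_add (add_le_add hy hy) (add_le_add hz hz)).trans ?_)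
    set t := (((m + 1 : ℕ) : ℝ)⁻¹) with ht
    have h4 : 4 * t ≤ ε := by
      rw [ht, ← div_eq_mul_inv, div_le_iff₀ hnpos, mul_comm]; exact hn4
    have h5 : 0 ≤ (ε - 4 * t) • e := smul_nonneg (sub_nonneg.2 h4) he0
    rw [← sub_nonneg]
    refine h5.trans_eq ?_
    module
end
end
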